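/- Let G and H be groups acting by homeomorphisms on connected topological manifolds M and N with N simply connected, and let (λ, φ) be a Morita morphism from G ⋉ M to H ⋉ N. Then φ : M → N is a homeomorphism and λ : G → H is a group isomorphism; that is, a Morita morphism into an action groupoid over a simply connected manifold is necessarily an isomorphism of action groupoids. -/

import Mathlib

/-!
A relation `h • φ x = φ x'` forces `h = lam g` with `g • x = x'`. Hence every `h` either maps the
range of `φ` onto itself or moves it off itself; as this range is open and its translates cover the
connected space `N`, `φ` is surjective. Also, the fibres of `φ` are the orbits of `ker lam`, which
acts freely, so `φ` is a covering map and therefore a homeomorphism as `N` is simply connected.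
-/

open Function MulAction

section QuotientCovering

variable {E X K : Type*} [TopologicalSpace E] [TopologicalSpace X] [Group K] [MulAction K E]
  [ContinuousConstSMul K E] [IsCancelSMul K E] {p : E → X}

theorem isQuotientCoveringMap_of_isLocallyInjective (hp : Topology.IsQuotientMap p)
    (hinj : IsLocallyInjective p) (horbit : ∀ {a b}, p a = p b ↔ a ∈ orbit K b) :
    IsQuotientCoveringMap p K where
  toIsQuotientMap := hp
  toContinuousConstSMul := inferInstance
  apply_eq_iff_mem_orbit := horbit
  disjoint x := by
    obtain ⟨U, hU, hxU, hinjU⟩ := hinj x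
    refine ⟨U, hU.mem_nhds hxU, ?_⟩
    rintro k ⟨_, ⟨u, hu, rfl⟩, hku⟩
    exact IsCancelSMul.eq_one_of_smul (hinjU hku hu (horbit.mpr (mem_orbit u k)))

end QuotientCovering

section SimplyConnected

variable {E X : Type*} [TopologicalSpace E] [TopologicalSpace X] [ConnectedSpace E]
  [SimplyConnectedSpace X] [LocallyPathConnectedSpace X] {p : E → X}

theorem isHomeomorph_of_isCoveringMap_of_simplyConnectedSpace (hp : IsCoveringMap p) :
    IsHomeomorph p := by
  obtain ⟨e⟩ : Nonempty E := inferInstance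
  obtain ⟨s, ⟨hse, hps⟩, -⟩ :=
    hp.existsUnique_continuousMap_lifts (ContinuousMap.id X) (p e) e rfl
  have right_inv : RightInverse s p := congrFun hps
  have hsp : s ∘ p = id :=
    hp.eq_of_comp_eq (s.continuous.comp hp.continuous) continuous_id
      (funext fun x ↦ right_inv (p x)) e hse
  exact isHomeomorph_iff_exists_inverse.mpr
    ⟨hp.continuous, s, congrFun hsp, right_inv, s.continuous⟩

end SimplyConnected

section Block

open scoped Pointwise

variable {H N : Type*} [Group H] [TopologicalSpace N] [MulAction H N] [ContinuousConstSMul H N]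
  {B : Set N}

theorem isClosed_of_isOpen_of_isBlock (hopen : IsOpen B) (hblock : IsBlock H B)
    (hcover : ∀ y : N, ∃ h : H, h • y ∈ B) : IsClosed B := by
  refine isOpen_compl_iff.mp (isOpen_iff_forall_mem_open.mpr fun y hy ↦ ?_)
  obtain ⟨h, hhy⟩ := hcover y
  have hy_mem : y ∈ h⁻¹ • B := Set.mem_inv_smul_set_iff.mpr hhy
  refine ⟨h⁻¹ • B, ?_, hopen.smul h⁻¹, hy_mem⟩
  have hne : h⁻¹ • B ≠ B := fun heq ↦ hy (heq ▸ hy_mem)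
  exact (isBlock_iff_smul_eq_or_disjoint.mp hblock h⁻¹).resolve_left hne |>.subset_compl_right

end Block

section MoritaMorphism

variable {G H M N : Type*} [Group G] [Group H] [TopologicalSpace M] [TopologicalSpace N]
  [MulAction G M] [MulAction H N]

/-- The pair `(lam, φ)` is a Morita morphism of action groupoids `G ⋉ M → H ⋉ N`: `φ` is a
`lam`-equivariant local homeomorphism, `lam` is bijective on stabilizers, and `φ` is bijective on
orbit spaces. The last condition is expressed by the final two fields, through representatives. -/
structure IsMoritaMorphism (lam : G →* H) (φ : M → N) : Prop where
  map_smul (g : G) (x : M) : φ (g • x) = lam g • φ x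
  isLocalHomeomorph : IsLocalHomeomorph φ
  bijOn_stabilizer (x : M) : Set.BijOn lam (stabilizer G x : Set G) (stabilizer H (φ x) : Set H)
  mem_orbit_of_map_mem_orbit (x x' : M) : φ x' ∈ orbit H (φ x) → x' ∈ orbit G x
  exists_map_mem_orbit (y : N) : ∃ x : M, φ x ∈ orbit H y

namespace IsMoritaMorphism

variable {lam : G →* H} {φ : M → N}

theorem exists_map_eq_and_smul_eq (hφ : IsMoritaMorphism lam φ) {h : H} {x x' : M}
    (hx : h • φ x = φ x') : ∃ g : G, lam g = h ∧ g • x = x' := by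
  obtain ⟨g, rfl⟩ : ∃ g : G, g • x = x' := hφ.mem_orbit_of_map_mem_orbit x x' ⟨h, hx⟩
  have hstab : (lam g)⁻¹ * h ∈ stabilizer H (φ x) := by
    rw [mem_stabilizer_iff, mul_smul, hx, hφ.map_smul, inv_smul_smul]
  obtain ⟨k, hk, hlam⟩ := (hφ.bijOn_stabilizer x).surjOn hstab
  exact ⟨g * k, by rw [map_mul, hlam, mul_inv_cancel_left],
    by rw [mul_smul, mem_stabilizer_iff.mp hk]⟩

theorem eq_one_of_smul_eq (hφ : IsMoritaMorphism lam φ) {g : G} {x : M} (hg : lam g = 1)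
    (hx : g • x = x) : g = 1 :=
  (hφ.bijOn_stabilizer x).injOn (mem_stabilizer_iff.mpr hx) (one_mem _) (hg.trans lam.map_one.symm)

theorem isCancelSMul_ker (hφ : IsMoritaMorphism lam φ) : IsCancelSMul lam.ker M :=
  isCancelSMul_iff_eq_one_of_smul_eq.mpr fun k _ hk ↦ Subtype.ext (hφ.eq_one_of_smul_eq k.2 hk)

theorem apply_eq_iff_mem_orbit_ker (hφ : IsMoritaMorphism lam φ) {x x' : M} :
    φ x = φ x' ↔ x ∈ orbit lam.ker x' := by
  constructor
  · intro hx
    obtain ⟨g, hg, rfl⟩ := hφ.exists_map_eq_and_smul_eq ((one_smul H (φ x')).trans hx.symm)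
    exact mem_orbit x' (⟨g, hg⟩ : lam.ker)
  · rintro ⟨⟨g, hg⟩, rfl⟩
    exact (hφ.map_smul g x').trans (by rw [MonoidHom.mem_ker.mp hg, one_smul])

open scoped Pointwise in
theorem isBlock_range (hφ : IsMoritaMorphism lam φ) : IsBlock H (Set.range φ) := by
  rw [isBlock_iff_smul_eq_of_nonempty]
  rintro h ⟨_, ⟨_, ⟨x, rfl⟩, rfl⟩, ⟨x', hx'⟩⟩
  obtain ⟨g, rfl, -⟩ := hφ.exists_map_eq_and_smul_eq hx'.symm
  calc lam g • Set.range φ = Set.range (fun x ↦ lam g • φ x) := Set.smul_set_range _ _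
    _ = Set.range (φ ∘ (g • ·)) := by simp only [← hφ.map_smul, comp_def]
    _ = Set.range φ := (MulAction.surjective g).range_comp φ

theorem surjective [ContinuousConstSMul H N] [ConnectedSpace N]
    (hφ : IsMoritaMorphism lam φ) : Surjective φ := by
  have hopen : IsOpen (Set.range φ) := hφ.isLocalHomeomorph.isOpenMap.isOpen_range
  have hcover (y : N) : ∃ h : H, h • y ∈ Set.range φ := by
    obtain ⟨x, h, hx⟩ := hφ.exists_map_mem_orbit y
    exact ⟨h, x, hx.symm⟩
  have hclosed := isClosed_of_isOpen_of_isBlock hopen hφ.isBlock_range hcover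
  obtain ⟨y⟩ : Nonempty N := inferInstance
  obtain ⟨h, hy⟩ := hcover y
  exact Set.range_eq_univ.mp (IsClopen.eq_univ ⟨hclosed, hopen⟩ ⟨_, hy⟩)

theorem isCoveringMap [ContinuousConstSMul G M] (hφ : IsMoritaMorphism lam φ)
    (hsurj : Surjective φ) : IsCoveringMap φ :=
  have hquot := hφ.isLocalHomeomorph.isOpenMap.isQuotientMap hφ.isLocalHomeomorph.continuous hsurj
  have := hφ.isCancelSMul_ker
  have : ContinuousConstSMul lam.ker M := ⟨fun k ↦ continuous_const_smul (k : G)⟩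
  (isQuotientCoveringMap_of_isLocallyInjective hquot hφ.isLocalHomeomorph.isLocallyInjective
    hφ.apply_eq_iff_mem_orbit_ker).isCoveringMap

theorem bijective_hom [Nonempty M] (hφ : IsMoritaMorphism lam φ) (hbij : Bijective φ) :
    Bijective lam := by
  obtain ⟨x⟩ : Nonempty M := inferInstance
  refine ⟨(injective_iff_map_eq_one lam).mpr fun g hg ↦ ?_, fun h ↦ ?_⟩
  · have hx : g • x = x := hbij.injective (by rw [hφ.map_smul, hg, one_smul])
    exact hφ.eq_one_of_smul_eq hg hx
  · obtain ⟨x', hx'⟩ := hbij.surjective (h • φ x)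
    obtain ⟨g, hg, -⟩ := hφ.exists_map_eq_and_smul_eq hx'.symm
    exact ⟨g, hg⟩

end IsMoritaMorphism

theorem morita_morphism_into_simply_connected_is_isomorphism_general
    [ConnectedSpace M] [SimplyConnectedSpace N] [LocallyPathConnectedSpace N]
    [ContinuousConstSMul G M] [ContinuousConstSMul H N] {lam : G →* H} {φ : M → N}
    (hφ : IsMoritaMorphism lam φ) : IsHomeomorph φ ∧ Bijective lam :=
  have hcov : IsCoveringMap φ := hφ.isCoveringMap hφ.surjective
  have hhomeo : IsHomeomorph φ := isHomeomorph_of_isCoveringMap_of_simplyConnectedSpace hcov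
  ⟨hhomeo, hφ.bijective_hom hhomeo.bijective⟩

end MoritaMorphism

/-- A Morita morphism of action groupoids `G ⋉ M → H ⋉ N` between actions of groups by
homeomorphisms on connected topological manifolds, with `N` simply connected, is an
isomorphism of action groupoids: `φ` is a homeomorphism and `lam` is a group
isomorphism. -/
theorem morita_morphism_into_simply_connected_is_isomorphism
    {G H M N : Type*} [Group G] [Group H]
    [TopologicalSpace M] [TopologicalSpace N]
    [T2Space M] [T2Space N] [ConnectedSpace M] [ConnectedSpace N]
    [SimplyConnectedSpace N]
    {m n : ℕ}
    [ChartedSpace (EuclideanSpace ℝ (Fin m)) M]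
    [ChartedSpace (EuclideanSpace ℝ (Fin n)) N]
    [MulAction G M] [MulAction H N]
    (hGcont : ∀ g : G, Continuous fun x : M => g • x)
    (hHcont : ∀ h : H, Continuous fun y : N => h • y)
    (lam : G →* H) (φ : M → N) (hφ : Continuous φ)
    (hequiv : ∀ (g : G) (x : M), φ (g • x) = lam g • φ x)
    (hloc : IsLocalHomeomorph φ)
    (hstab : ∀ x : M, Set.BijOn lam
      (MulAction.stabilizer G x : Set G) (MulAction.stabilizer H (φ x) : Set H))
    (horb_inj : ∀ x x' : M, φ x' ∈ MulAction.orbit H (φ x) → x' ∈ MulAction.orbit G x)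
    (horb_surj : ∀ y : N, ∃ x : M, φ x ∈ MulAction.orbit H y) :
    IsHomeomorph φ ∧ Function.Bijective lam := by
  have : ContinuousConstSMul G M := ⟨hGcont⟩
  have : ContinuousConstSMul H N := ⟨hHcont⟩
  have : LocallyPathConnectedSpace N :=
    ChartedSpace.locallyPathConnectedSpace (EuclideanSpace ℝ (Fin n)) N
  exact morita_morphism_into_simply_connected_is_isomorphism_general
    ⟨hequiv, hloc, hstab, horb_inj, horb_surj⟩
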